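/- Fix an integer M ≥ 1, T > 0, ε > 0, c ≥ 0 and p₀ ∈ [0,1). Then there exists a unique family (Ψ^m)_{m∈ℕ} of continuously differentiable functions Ψ^m : [0,T] → ℝ satisfying: (Ψ⁰)'(t) = Ψ⁰(t)² − ε(1−p₀) with Ψ⁰(T) = c(1−p₀); (Ψ¹)'(t) = 2·Ψ⁰(t)·Ψ¹(t) + ε(1−p₀)/M with Ψ¹(T) = −c(1−p₀)/M; and for every m ≥ 2, (Ψ^m)'(t) = ∑_{i=0}^{m} Ψ^i(t)·Ψ^{m−i}(t) with Ψ^m(T) = 0. -/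

import Mathlib

/-!
The system is triangular in the depth. Only the equation for `Ψ⁰` is nonlinear; once `Ψ⁰` is
known, the equation for each `Ψ^m`, `m ≥ 1`, is a scalar linear equation `y' = 2 Ψ⁰ y + g`, because
the two extreme terms of the convolution sum give `2 Ψ⁰ Ψ^m` and the remaining ones only involve
depths strictly between `0` and `m` (`sum_conv_split`).

Existence. With `k = √(ε(1-p₀))`, `a = c(1-p₀)` and `D(s) = k cosh(ks) + a sinh(ks)`, one has
`D'' = k² D` and, as `a ≥ 0`, `D > 0` on `[0,∞)`. Hence `Ψ⁰(t) = D'(T-t)/D(T-t)` solves the Riccati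
equation on all of `[0,T]` (`riccatiSol_hasDerivWithinAt`). The other depths are obtained
recursively by variation of constants (`linSol`).

Uniqueness. The difference `d` of two solutions vanishes at `T` and satisfies a homogeneous linear
equation `d' = B d` with `B` continuous: `B = Ψ⁰ + Φ⁰` at depth `0`, and `B = 2 Ψ⁰` at depth `m ≥ 1`
once the smaller depths are known to agree. An integrating factor shows `d = 0`
(`eq_zero_of_linear`).
-/

open Real

/-- The depth-indexed Riccati system of the random directed tree game with `M`
potential offspring, horizon `T`, running-cost weight `ε`, terminal-cost weight `c`
and no-interaction probability `p₀`:
`(Ψ⁰)' = (Ψ⁰)² − ε(1−p₀)`, `Ψ⁰(T) = c(1−p₀)`;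
`(Ψ¹)' = 2Ψ⁰Ψ¹ + ε(1−p₀)/M`, `Ψ¹(T) = −c(1−p₀)/M`;
and `(Ψ^m)' = ∑_{i=0}^{m} Ψ^i·Ψ^{m−i}`, `Ψ^m(T) = 0` for `m ≥ 2`. -/
def TreeDepthRiccati (M : ℕ) (T ε c p₀ : ℝ) (Ψ : ℕ → ℝ → ℝ) : Prop :=
  (∀ m, ContDiffOn ℝ 1 (Ψ m) (Set.Icc 0 T)) ∧
  (∀ t ∈ Set.Icc (0:ℝ) T,
    HasDerivWithinAt (Ψ 0) ((Ψ 0 t) ^ 2 - ε * (1 - p₀)) (Set.Icc 0 T) t) ∧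
  Ψ 0 T = c * (1 - p₀) ∧
  (∀ t ∈ Set.Icc (0:ℝ) T,
    HasDerivWithinAt (Ψ 1) (2 * Ψ 0 t * Ψ 1 t + ε * (1 - p₀) / M) (Set.Icc 0 T) t) ∧
  Ψ 1 T = -(c * (1 - p₀) / M) ∧
  (∀ m, 2 ≤ m →
    (∀ t ∈ Set.Icc (0:ℝ) T,
      HasDerivWithinAt (Ψ m) (∑ i ∈ Finset.range (m + 1), Ψ i t * Ψ (m - i) t)
        (Set.Icc 0 T) t) ∧
    Ψ m T = 0)

/-- The retraction of the line onto `[0,T]`. Precomposing with it extends a function continuous on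
`[0,T]` to a function continuous on the whole line, so that its primitives are differentiable
everywhere. -/
def clampIcc (T t : ℝ) : ℝ := max 0 (min T t)

lemma clampIcc_of_mem {T t : ℝ} (ht : t ∈ Set.Icc (0:ℝ) T) : clampIcc T t = t := by
  simp [clampIcc, ht.1, ht.2]

lemma continuous_comp_clampIcc {T : ℝ} (hT : 0 < T) {f : ℝ → ℝ}
    (hf : ContinuousOn f (Set.Icc 0 T)) : Continuous (fun t => f (clampIcc T t)) := by
  refine hf.comp_continuous (by unfold clampIcc; fun_prop) fun t => ?_
  exact ⟨le_max_left _ _, max_le hT.le (min_le_left _ _)⟩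

/-- The primitive, vanishing at `T`, of the extension of `f` by constants outside `[0,T]`. -/
noncomputable def primT (T : ℝ) (f : ℝ → ℝ) (t : ℝ) : ℝ := ∫ s in T..t, f (clampIcc T s)

lemma primT_self (T : ℝ) (f : ℝ → ℝ) : primT T f T = 0 := by simp [primT]

lemma primT_hasDerivAt {T : ℝ} (hT : 0 < T) {f : ℝ → ℝ}
    (hf : ContinuousOn f (Set.Icc 0 T)) {t : ℝ} (ht : t ∈ Set.Icc (0:ℝ) T) :
    HasDerivAt (primT T f) (f t) t := by
  have hc := continuous_comp_clampIcc hT hf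
  have h := intervalIntegral.integral_hasDerivAt_right (hc.intervalIntegrable T t)
    (hc.stronglyMeasurableAtFilter _ _) hc.continuousAt
  rwa [clampIcc_of_mem ht] at h

/-- The variation-of-constants solution of `y' = A y + g` on `[0,T]` with `y(T) = b`. -/
noncomputable def linSol (T : ℝ) (A g : ℝ → ℝ) (b t : ℝ) : ℝ :=
  Real.exp (primT T A t) * (b + primT T (fun s => Real.exp (-primT T A s) * g s) t)

lemma linSol_self (T : ℝ) (A g : ℝ → ℝ) (b : ℝ) : linSol T A g b T = b := by
  simp [linSol, primT_self]

lemma linSol_hasDerivAt {T : ℝ} (hT : 0 < T) {A g : ℝ → ℝ} (b : ℝ)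
    (hA : ContinuousOn A (Set.Icc 0 T)) (hg : ContinuousOn g (Set.Icc 0 T))
    {t : ℝ} (ht : t ∈ Set.Icc (0:ℝ) T) :
    HasDerivAt (linSol T A g b) (A t * linSol T A g b t + g t) t := by
  have hP : ContinuousOn (primT T A) (Set.Icc 0 T) := fun s hs =>
    (primT_hasDerivAt hT hA hs).continuousAt.continuousWithinAt
  have hG : ContinuousOn (fun s => Real.exp (-primT T A s) * g s) (Set.Icc 0 T) :=
    (Real.continuous_exp.comp_continuousOn hP.neg).mul hg
  have h := (primT_hasDerivAt hT hA ht).exp.mul ((primT_hasDerivAt hT hG ht).const_add b)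
  refine h.congr_deriv ?_
  have he : Real.exp (primT T A t) * Real.exp (-primT T A t) = 1 := by
    rw [← Real.exp_add]; simp
  unfold linSol
  linear_combination g t * he

/-- A solution of a homogeneous linear equation that vanishes at `T` is zero: multiplied by the
integrating factor it has zero derivative. -/
lemma eq_zero_of_linear {T : ℝ} (hT : 0 < T) {B d : ℝ → ℝ}
    (hB : ContinuousOn B (Set.Icc 0 T)) (hdT : d T = 0)
    (hd : ∀ t ∈ Set.Icc (0:ℝ) T, HasDerivWithinAt d (B t * d t) (Set.Icc 0 T) t)
    {t : ℝ} (ht : t ∈ Set.Icc (0:ℝ) T) : d t = 0 := by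
  have h0 : ∀ s ∈ Set.Icc (0:ℝ) T,
      HasDerivWithinAt (fun s => Real.exp (-primT T B s) * d s) 0 (Set.Icc 0 T) s := by
    intro s hs
    have h := ((primT_hasDerivAt hT hB hs).neg.exp.hasDerivWithinAt (s := Set.Icc 0 T)).mul (hd s hs)
    refine h.congr_deriv ?_
    simp only [Pi.neg_apply]
    ring
  have h := (convex_Icc (0:ℝ) T).norm_image_sub_le_of_norm_hasDerivWithin_le (C := 0) h0
    (fun s _ => by simp) (Set.right_mem_Icc.2 hT.le) ht
  have h' : ‖Real.exp (-primT T B t) * d t‖ ≤ 0 := by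
    simpa only [hdT, mul_zero, sub_zero, zero_mul] using h
  exact (mul_eq_zero.1 (norm_le_zero_iff.1 h')).resolve_left (Real.exp_ne_zero _)

lemma contDiffOn_one_of_hasDerivWithinAt {T : ℝ} (hT : 0 < T) {f f' : ℝ → ℝ}
    (hf : ∀ t ∈ Set.Icc (0:ℝ) T, HasDerivWithinAt f (f' t) (Set.Icc 0 T) t)
    (hf' : ContinuousOn f' (Set.Icc 0 T)) : ContDiffOn ℝ 1 f (Set.Icc 0 T) := by
  have hu := uniqueDiffOn_Icc hT
  rw [contDiffOn_one_iff_derivWithin hu]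
  exact ⟨fun t ht => (hf t ht).differentiableWithinAt,
    hf'.congr fun t ht => (hf t ht).derivWithin (hu t ht)⟩

/-- The two extreme terms of the convolution sum at depth `m + 1 ≥ 1` split off; the remaining terms
involve the depths `1, …, m` only. -/
lemma sum_conv_split (f : ℕ → ℝ) (m : ℕ) :
    ∑ i ∈ Finset.range (m + 1 + 1), f i * f (m + 1 - i)
      = 2 * f 0 * f (m + 1) + ∑ i ∈ Finset.range m, f (i + 1) * f (m - i) := by
  rw [Finset.sum_range_succ, Finset.sum_range_succ']
  simp only [Nat.add_sub_add_right, Nat.sub_self, Nat.sub_zero]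
  ring

/-- `D'(T-t)/D(T-t)` for `D(s) = k cosh(ks) + a sinh(ks)`: the solution of `y' = y² - k²` with
`y(T) = a`. -/
noncomputable def riccatiSol (T k a t : ℝ) : ℝ :=
  k * (k * Real.sinh (k * (T - t)) + a * Real.cosh (k * (T - t))) /
    (k * Real.cosh (k * (T - t)) + a * Real.sinh (k * (T - t)))

lemma riccatiSol_self (T : ℝ) {k : ℝ} (hk : 0 < k) (a : ℝ) : riccatiSol T k a T = a := by
  simp [riccatiSol, hk.ne']

lemma riccatiSol_hasDerivWithinAt {T k a : ℝ} (hk : 0 < k) (ha : 0 ≤ a) {t : ℝ}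
    (ht : t ∈ Set.Icc (0:ℝ) T) :
    HasDerivWithinAt (riccatiSol T k a) (riccatiSol T k a t ^ 2 - k ^ 2) (Set.Icc 0 T) t := by
  have hs : 0 ≤ Real.sinh (k * (T - t)) :=
    Real.sinh_nonneg_iff.2 (mul_nonneg hk.le (sub_nonneg.2 ht.2))
  have hD : k * Real.cosh (k * (T - t)) + a * Real.sinh (k * (T - t)) ≠ 0 := by
    have := Real.cosh_pos (k * (T - t))
    positivity
  have hl : HasDerivAt (fun t : ℝ => k * (T - t)) (-k) t := by
    simpa using ((hasDerivAt_id t).const_sub T).const_mul k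
  have h := (((hl.sinh.const_mul k).add (hl.cosh.const_mul a)).const_mul k).div
    ((hl.cosh.const_mul k).add (hl.sinh.const_mul a)) hD
  refine (h.congr_deriv ?_).hasDerivWithinAt
  simp only [Pi.add_apply, riccatiSol]
  field_simp
  ring

/-- The solution, by recursion on the depth: the Riccati solution at depth `0`, then the
variation-of-constants solution whose source term is `g₁` at depth `1` and the inner convolution sum
at depth at least `2`. The terminal value is `b₁` at depth `1` and `0` beyond. -/
noncomputable def treeSol (T k a g₁ b₁ : ℝ) : ℕ → ℝ → ℝ
  | 0 => riccatiSol T k a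
  | m + 1 => linSol T (fun t => 2 * riccatiSol T k a t)
      (fun t => if m = 0 then g₁ else
        ∑ i : Fin m, treeSol T k a g₁ b₁ (i + 1) t * treeSol T k a g₁ b₁ (m - i) t)
      (if m = 0 then b₁ else 0)
  decreasing_by all_goals omega

lemma treeSol_zero (T k a g₁ b₁ : ℝ) : treeSol T k a g₁ b₁ 0 = riccatiSol T k a := by
  rw [treeSol]

lemma treeSol_succ (T k a g₁ b₁ : ℝ) (m : ℕ) :
    treeSol T k a g₁ b₁ (m + 1) = linSol T (fun t => 2 * treeSol T k a g₁ b₁ 0 t)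
      (fun t => if m = 0 then g₁ else ∑ i ∈ Finset.range m,
        treeSol T k a g₁ b₁ (i + 1) t * treeSol T k a g₁ b₁ (m - i) t)
      (if m = 0 then b₁ else 0) := by
  rw [treeSol_zero, treeSol]
  congr 1
  funext t
  rw [← Fin.sum_univ_eq_sum_range
    (fun i => treeSol T k a g₁ b₁ (i + 1) t * treeSol T k a g₁ b₁ (m - i) t)]

lemma continuousOn_source {T : ℝ} {Ψ : ℕ → ℝ → ℝ} (g₁ : ℝ) (m : ℕ)
    (h : ∀ i ≤ m, ContinuousOn (Ψ i) (Set.Icc 0 T)) :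
    ContinuousOn (fun t => if m = 0 then g₁ else
      ∑ i ∈ Finset.range m, Ψ (i + 1) t * Ψ (m - i) t) (Set.Icc 0 T) := by
  split_ifs
  · exact continuousOn_const
  · refine continuousOn_finsetSum _ fun i hi => ?_
    have := Finset.mem_range.1 hi
    exact (h _ (by omega)).mul (h _ (by omega))

lemma treeSol_continuousOn {T k a : ℝ} (hT : 0 < T) (hk : 0 < k) (ha : 0 ≤ a) (g₁ b₁ : ℝ) (m : ℕ) :
    ContinuousOn (treeSol T k a g₁ b₁ m) (Set.Icc 0 T) := by
  have h0 : ContinuousOn (treeSol T k a g₁ b₁ 0) (Set.Icc 0 T) := fun t ht => by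
    rw [treeSol_zero]
    exact (riccatiSol_hasDerivWithinAt hk ha ht).continuousWithinAt
  induction m using Nat.strong_induction_on with
  | _ m ih =>
    rcases m with _ | m
    · exact h0
    · rw [treeSol_succ]
      exact fun t ht => (linSol_hasDerivAt hT _ (continuousOn_const.mul h0)
        (continuousOn_source g₁ m fun i hi => ih i (by omega)) ht).continuousAt.continuousWithinAt

lemma treeSol_succ_hasDerivWithinAt {T k a : ℝ} (hT : 0 < T) (hk : 0 < k) (ha : 0 ≤ a)
    (g₁ b₁ : ℝ) (m : ℕ) {t : ℝ} (ht : t ∈ Set.Icc (0:ℝ) T) :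
    HasDerivWithinAt (treeSol T k a g₁ b₁ (m + 1))
      (2 * treeSol T k a g₁ b₁ 0 t * treeSol T k a g₁ b₁ (m + 1) t +
        if m = 0 then g₁ else ∑ i ∈ Finset.range m,
          treeSol T k a g₁ b₁ (i + 1) t * treeSol T k a g₁ b₁ (m - i) t) (Set.Icc 0 T) t := by
  have hc := treeSol_continuousOn hT hk ha g₁ b₁
  have h := linSol_hasDerivAt hT (if m = 0 then b₁ else 0)
    (continuousOn_const.mul (hc 0)) (continuousOn_source g₁ m fun i _ => hc i) ht (A := fun t => 2 * _)
  rw [← treeSol_succ] at h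
  exact h.hasDerivWithinAt

theorem treeDepthRiccati_exists {M : ℕ} {T ε c p₀ : ℝ} (hT : 0 < T) (hε : 0 < ε)
    (hc : 0 ≤ c) (hp₀ : p₀ < 1) : ∃ Ψ : ℕ → ℝ → ℝ, TreeDepthRiccati M T ε c p₀ Ψ := by
  have hq : 0 < 1 - p₀ := sub_pos.2 hp₀
  have hk : 0 < √(ε * (1 - p₀)) := Real.sqrt_pos.2 (mul_pos hε hq)
  have hk2 : √(ε * (1 - p₀)) ^ 2 = ε * (1 - p₀) := Real.sq_sqrt (mul_pos hε hq).le
  have ha : 0 ≤ c * (1 - p₀) := mul_nonneg hc hq.le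
  have hcont := treeSol_continuousOn hT hk ha (ε * (1 - p₀) / M) (-(c * (1 - p₀) / M))
  have hsucc := fun (m : ℕ) (t : ℝ) (ht : t ∈ Set.Icc (0:ℝ) T) =>
    treeSol_succ_hasDerivWithinAt hT hk ha (ε * (1 - p₀) / M) (-(c * (1 - p₀) / M)) m ht
  have h0 : ∀ t ∈ Set.Icc (0:ℝ) T, HasDerivWithinAt
      (treeSol T √(ε * (1 - p₀)) (c * (1 - p₀)) (ε * (1 - p₀) / M) (-(c * (1 - p₀) / M)) 0)
      (treeSol T √(ε * (1 - p₀)) (c * (1 - p₀)) (ε * (1 - p₀) / M) (-(c * (1 - p₀) / M)) 0 t ^ 2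
        - ε * (1 - p₀)) (Set.Icc 0 T) t := fun t ht => by
    have h := riccatiSol_hasDerivWithinAt hk ha ht
    rwa [hk2, ← treeSol_zero T _ _ (ε * (1 - p₀) / M) (-(c * (1 - p₀) / M))] at h
  refine ⟨treeSol T √(ε * (1 - p₀)) (c * (1 - p₀)) (ε * (1 - p₀) / M) (-(c * (1 - p₀) / M)),
    ?_, h0, ?_, fun t ht => by simpa using hsucc 0 t ht, ?_, ?_⟩
  · rintro (_ | m)
    · exact contDiffOn_one_of_hasDerivWithinAt hT h0 (((hcont 0).pow 2).sub continuousOn_const)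
    · exact contDiffOn_one_of_hasDerivWithinAt hT (hsucc m)
        (((continuousOn_const.mul (hcont 0)).mul (hcont (m + 1))).add
          (continuousOn_source _ m fun i _ => hcont i))
  · rw [treeSol_zero, riccatiSol_self T hk]
  · rw [treeSol_succ, linSol_self, if_pos rfl]
  · rintro (_ | m) hm
    · omega
    have hm0 : m ≠ 0 := by omega
    refine ⟨fun t ht => ?_, by rw [treeSol_succ, linSol_self, if_neg hm0]⟩
    have h := hsucc m t ht
    rw [if_neg hm0] at h
    exact h.congr_deriv (sum_conv_split (fun i => treeSol T _ _ _ _ i t) m).symm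

theorem treeDepthRiccati_unique {M : ℕ} {T ε c p₀ : ℝ} (hT : 0 < T) {Ψ Φ : ℕ → ℝ → ℝ}
    (hΨ : TreeDepthRiccati M T ε c p₀ Ψ) (hΦ : TreeDepthRiccati M T ε c p₀ Φ) (m : ℕ) :
    ∀ t ∈ Set.Icc (0:ℝ) T, Ψ m t = Φ m t := by
  obtain ⟨hC, hd0, hT0, hd1, hT1, hdm⟩ := hΨ
  obtain ⟨hC', hd0', hT0', hd1', hT1', hdm'⟩ := hΦ
  have h0 : ∀ t ∈ Set.Icc (0:ℝ) T, Ψ 0 t = Φ 0 t := fun t ht => sub_eq_zero.1 <|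
    eq_zero_of_linear hT (B := fun t => Ψ 0 t + Φ 0 t) (d := fun t => Ψ 0 t - Φ 0 t)
      ((hC 0).continuousOn.add (hC' 0).continuousOn) (by simp only [hT0, hT0', sub_self])
      (fun s hs => ((hd0 s hs).sub (hd0' s hs)).congr_deriv (by ring)) ht
  induction m using Nat.strong_induction_on with
  | _ m ih =>
    rcases m with _ | m
    · exact h0
    refine fun t ht => sub_eq_zero.1 <| eq_zero_of_linear hT (B := fun t => 2 * Ψ 0 t)
      (d := fun t => Ψ (m + 1) t - Φ (m + 1) t)
      (continuousOn_const.mul (hC 0).continuousOn) ?_ (fun s hs => ?_) ht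
    · rcases Nat.eq_zero_or_pos m with rfl | hm
      · simp only [zero_add, hT1, hT1', sub_self]
      · simp only [(hdm (m + 1) (by omega)).2, (hdm' (m + 1) (by omega)).2, sub_self]
    · rcases Nat.eq_zero_or_pos m with rfl | hm
      · refine ((hd1 s hs).sub (hd1' s hs)).congr_deriv ?_
        simp only [zero_add, h0 s hs]
        ring
      · refine (((hdm (m + 1) (by omega)).1 s hs).sub
          ((hdm' (m + 1) (by omega)).1 s hs)).congr_deriv ?_
        rw [sum_conv_split (fun i => Ψ i s) m, sum_conv_split (fun i => Φ i s) m]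
        have hsum : ∑ i ∈ Finset.range m, Ψ (i + 1) s * Ψ (m - i) s
            = ∑ i ∈ Finset.range m, Φ (i + 1) s * Φ (m - i) s := by
          refine Finset.sum_congr rfl fun i hi => ?_
          have := Finset.mem_range.1 hi
          rw [ih (i + 1) (by omega) s hs, ih (m - i) (by omega) s hs]
        rw [hsum, h0 s hs]
        ring

/-- Existence and uniqueness (on `[0,T]`) of the solution of the depth-indexed
Riccati system of the random directed tree game. -/
theorem stmt_17 (M : ℕ) (hM : 1 ≤ M) (T ε c p₀ : ℝ) (hT : 0 < T) (hε : 0 < ε)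
    (hc : 0 ≤ c) (hp₀ : p₀ ∈ Set.Ico (0:ℝ) 1) :
    (∃ Ψ : ℕ → ℝ → ℝ, TreeDepthRiccati M T ε c p₀ Ψ) ∧
    (∀ Ψ Φ : ℕ → ℝ → ℝ, TreeDepthRiccati M T ε c p₀ Ψ → TreeDepthRiccati M T ε c p₀ Φ →
      ∀ m, ∀ t ∈ Set.Icc (0:ℝ) T, Ψ m t = Φ m t) :=
  ⟨treeDepthRiccati_exists hT hε hc hp₀.2, fun _ _ hΨ hΦ => treeDepthRiccati_unique hT hΨ hΦ⟩
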